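/- Let g:[0,∞)→[0,∞] be a nondecreasing function, ρ > 0, φ_ρ(λ) = inf_{y>0} { g(y) + λ/y^ρ } for λ ≥ 0, and λ* = inf_{y>1} { (y^ρ/(y^ρ-1)) g(y) }. Then: (i) for every c ≥ 0, φ_ρ(c) ≥ c if and only if c ≤ λ*; (ii) if λ* < ∞ then φ_ρ(λ*) = λ*. -/

import Mathlib

open MeasureTheory ProbabilityTheory Filter Set Topology
open scoped ENNReal

/-- `-log p`, valued in `[0,∞]`, with the convention `-log 0 = ∞`. -/
noncomputable def negLog (p : ℝ≥0∞) : ℝ≥0∞ :=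
  if p = 0 then ⊤ else ENNReal.ofReal (-Real.log p.toReal)

/-- `H` is positive, continuous and strictly decreasing on `(0,∞)`, and regularly
varying at `0` with index `-ρ < 0`. -/
structure IsRVatZero (H : ℝ → ℝ) (ρ : ℝ) : Prop where
  rho_pos : 0 < ρ
  pos : ∀ x ∈ Set.Ioi (0:ℝ), 0 < H x
  contOn : ContinuousOn H (Set.Ioi 0)
  anti : StrictAntiOn H (Set.Ioi 0)
  rv : ∀ y ∈ Set.Ioi (0:ℝ),
    Filter.Tendsto (fun x => H (y * x) / H x) (nhdsWithin 0 (Set.Ioi 0)) (nhds (y ^ (-ρ)))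

/-- `X` is an `IED^ρ_H(l)`-random variable with respect to `μ`:
`lim_{ε→0⁺} (-log P(X < ε))/H(ε) = l`. -/
def IsIED {Ω : Type*} [MeasurableSpace Ω] (μ : Measure Ω) (X : Ω → ℝ)
    (H : ℝ → ℝ) (l : ℝ≥0∞) : Prop :=
  Filter.Tendsto (fun ε => negLog (μ {ω | X ω < ε}) / ENNReal.ofReal (H ε))
    (nhdsWithin 0 (Set.Ioi 0)) (nhds l)

/-- `g` is the `(ρ,H)`-local dependence measure of the pair `(A,B)`:
`g(y) = lim_{ε→0⁺} (-log P(εAy + B < ε))/H(ε)` for every `y ≥ 0`. -/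
def IsLDM {Ω : Type*} [MeasurableSpace Ω] (μ : Measure Ω) (A B : Ω → ℝ)
    (H : ℝ → ℝ) (g : ℝ → ℝ≥0∞) : Prop :=
  ∀ y : ℝ, 0 ≤ y →
    Filter.Tendsto (fun ε => negLog (μ {ω | ε * A ω * y + B ω < ε}) / ENNReal.ofReal (H ε))
      (nhdsWithin 0 (Set.Ioi 0)) (nhds (g y))

/-- The Legendre-type transform `φ_ρ(λ) = inf_{y>0} { g(y) + λ/y^ρ }`. -/
noncomputable def phi (g : ℝ → ℝ≥0∞) (ρ : ℝ) (l : ℝ≥0∞) : ℝ≥0∞ :=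
  ⨅ y ∈ Set.Ioi (0:ℝ), (g y + l / ENNReal.ofReal (y ^ ρ))

/-- `λ* = inf_{y>1} { (y^ρ/(y^ρ-1)) g(y) }`. -/
noncomputable def lambdaStar (g : ℝ → ℝ≥0∞) (ρ : ℝ) : ℝ≥0∞ :=
  ⨅ y ∈ Set.Ioi (1:ℝ), ENNReal.ofReal (y ^ ρ / (y ^ ρ - 1)) * g y

theorem aux_iff (Y : ℝ) (hY : 1 < Y) (c x : ℝ≥0∞) (hc : c ≠ ⊤) :
    c ≤ x + c / ENNReal.ofReal Y ↔ c ≤ ENNReal.ofReal (Y / (Y - 1)) * x := by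
  have hY0 : 0 < Y := by linarith
  have hY1 : 0 < Y - 1 := by linarith
  have ha : 0 < Y / (Y - 1) := by positivity
  by_cases hx : x = ⊤
  · subst hx
    rw [ENNReal.mul_top (by simpa using ha)]
    simp
  obtain ⟨c, hc0, rfl⟩ : ∃ r : ℝ, 0 ≤ r ∧ c = ENNReal.ofReal r :=
    ⟨c.toReal, ENNReal.toReal_nonneg, (ENNReal.ofReal_toReal hc).symm⟩
  obtain ⟨x, hx0, rfl⟩ : ∃ r : ℝ, 0 ≤ r ∧ x = ENNReal.ofReal r :=
    ⟨x.toReal, ENNReal.toReal_nonneg, (ENNReal.ofReal_toReal hx).symm⟩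
  rw [← ENNReal.ofReal_div_of_pos hY0, ← ENNReal.ofReal_add hx0 (by positivity),
    ← ENNReal.ofReal_mul ha.le, ENNReal.ofReal_le_ofReal_iff (by positivity),
    ENNReal.ofReal_le_ofReal_iff (by positivity)]
  have e1 : x + c / Y = (x * Y + c) / Y := by field_simp
  have e2 : Y / (Y - 1) * x = (Y * x) / (Y - 1) := by ring
  rw [e1, e2, le_div_iff₀ hY0, le_div_iff₀ hY1]
  constructor <;> intro h <;> linarith

theorem aux_eq (Y : ℝ) (hY : 1 < Y) (x : ℝ≥0∞) :
    x + ENNReal.ofReal (Y / (Y - 1)) * x / ENNReal.ofReal Y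
      = ENNReal.ofReal (Y / (Y - 1)) * x := by
  have hY0 : 0 < Y := by linarith
  have hY1 : 0 < Y - 1 := by linarith
  have ha : 0 < Y / (Y - 1) := by positivity
  by_cases hx : x = ⊤
  · subst hx
    rw [ENNReal.mul_top (by simpa using ha)]
    simp
  obtain ⟨x, hx0, rfl⟩ : ∃ r : ℝ, 0 ≤ r ∧ x = ENNReal.ofReal r :=
    ⟨x.toReal, ENNReal.toReal_nonneg, (ENNReal.ofReal_toReal hx).symm⟩
  rw [← ENNReal.ofReal_mul ha.le, ← ENNReal.ofReal_div_of_pos hY0,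
    ← ENNReal.ofReal_add hx0 (by positivity)]
  congr 1
  field_simp
  ring

/-- Lemma `pro:lambdastar`.
For nondecreasing `g : [0,∞) → [0,∞]` and `ρ > 0`:
(i) for every `c ≥ 0`, `φ_ρ(c) ≥ c` if and only if `c ≤ λ*`;
(ii) if `λ* < ∞` then `φ_ρ(λ*) = λ*`. -/
theorem stmt5 (g : ℝ → ℝ≥0∞) (ρ : ℝ) (hρ : 0 < ρ) (hmono : MonotoneOn g (Set.Ici 0)) :
    (∀ c : ℝ≥0∞, c ≠ ⊤ → (c ≤ phi g ρ c ↔ c ≤ lambdaStar g ρ))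
    ∧ (lambdaStar g ρ ≠ ⊤ → phi g ρ (lambdaStar g ρ) = lambdaStar g ρ) := by
  have key : ∀ c : ℝ≥0∞, c ≠ ⊤ → (c ≤ phi g ρ c ↔ c ≤ lambdaStar g ρ) := by
    intro c hc
    unfold phi lambdaStar
    simp only [le_iInf_iff, Set.mem_Ioi]
    constructor
    · intro h y hy
      exact (aux_iff _ (Real.one_lt_rpow hy hρ) c _ hc).1 (h y (by linarith))
    · intro h y hy
      rcases lt_or_ge 1 y with h1 | h1
      · exact (aux_iff _ (Real.one_lt_rpow h1 hρ) c _ hc).2 (h y h1)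
      · have hle : ENNReal.ofReal (y ^ ρ) ≤ 1 := by
          rw [← ENNReal.ofReal_one]
          exact ENNReal.ofReal_le_ofReal (Real.rpow_le_one hy.le h1 hρ.le)
        calc c = c / 1 := by simp
          _ ≤ c / ENNReal.ofReal (y ^ ρ) := ENNReal.div_le_div_left hle c
          _ ≤ _ := le_add_self
  refine ⟨key, fun hL => le_antisymm ?_ ((key _ hL).2 le_rfl)⟩
  conv_rhs => unfold lambdaStar
  simp only [le_iInf_iff, Set.mem_Ioi]
  intro y hy
  have h1 : lambdaStar g ρ ≤ ENNReal.ofReal (y ^ ρ / (y ^ ρ - 1)) * g y :=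
    iInf₂_le y hy
  have h2 : phi g ρ (lambdaStar g ρ) ≤ g y + lambdaStar g ρ / ENNReal.ofReal (y ^ ρ) :=
    iInf₂_le y (Set.mem_Ioi.2 (by linarith))
  refine h2.trans ?_
  rw [← aux_eq (y ^ ρ) (Real.one_lt_rpow hy hρ) (g y)]
  gcongr
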